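/- Let f be a probability density supported on [l,h] with 0 < l ≤ h < ∞, with CDF F, and define ψ(t) := 2∫_{t'≥t} f(t')/t' dt' − (1/t)·∫_{t'≥t} f(t') dt'. Then for every r > 0, −∫_{0 < t ≤ r} t·ψ(t) dt ≤ r·(1 − F(r)) ≤ sup_{r'≥0} r'·(1 − F(r')). -/

import Mathlib

open MeasureTheory Set

/-!
By Fubini over the wedge `0 < t ≤ s`, `t ≤ r`, the integral of
`t * ψ t = ∫ s in Ici t, (2 * t / s - 1) * f s` over `Ioc 0 r` weights `f s` by
`∫ t in 0..min r s, (2 * t / s - 1) = (min r s) ^ 2 / s - min r s`. This weight vanishes for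
`s ≤ r`, so `-∫ t * ψ t` equals the revenue `r * ∫ s in Ioi r, f s` minus the nonnegative term
`r ^ 2 * ∫ s in Ioi r, f s / s`.
-/

section Wedge

variable {α E : Type*} [LinearOrder α] [TopologicalSpace α] [OrderClosedTopology α]
  [SecondCountableTopology α] [MeasurableSpace α] [OpensMeasurableSpace α]
  [NormedAddCommGroup E] [NormedSpace ℝ E] {μ ν : Measure α} [SFinite μ] [SFinite ν]

lemma integral_setIntegral_Ici_swap {k : α → α → E}
    (hk : IntegrableOn (Function.uncurry k) {p | p.1 ≤ p.2} (μ.prod ν)) :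
    ∫ t, ∫ s in Ici t, k t s ∂ν ∂μ = ∫ s, ∫ t in Iic s, k t s ∂μ ∂ν := by
  have hwedge : MeasurableSet {p : α × α | p.1 ≤ p.2} :=
    measurableSet_le measurable_fst measurable_snd
  simpa only [← integral_indicator measurableSet_Ici, ← integral_indicator measurableSet_Iic,
    indicator_apply, mem_Ici, mem_Iic] using integral_integral_swap
      (f := fun t s => (Ici t).indicator (k t) s) (hk.integrable_indicator hwedge)

end Wedge

lemma integrableOn_Ici_div_id {f : ℝ → ℝ} {a : ℝ} (ha : 0 < a) (hf : IntegrableOn f (Ici a)) :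
    IntegrableOn (fun s => f s / s) (Ici a) := by
  simp only [div_eq_mul_inv]
  refine hf.mul_bdd (c := a⁻¹) measurable_inv.aestronglyMeasurable ?_
  filter_upwards [ae_restrict_mem measurableSet_Ici] with s hs
  rw [norm_inv, Real.norm_of_nonneg (ha.le.trans hs)]
  exact inv_anti₀ ha hs

lemma setIntegral_Ici_two_mul_div_sub_one_mul {f : ℝ → ℝ} {t : ℝ} (ht : 0 < t)
    (hf : IntegrableOn f (Ici t)) :
    ∫ s in Ici t, (2 * t / s - 1) * f s =
      2 * t * (∫ s in Ici t, f s / s) - ∫ s in Ici t, f s := by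
  rw [← integral_const_mul, ← integral_sub ((integrableOn_Ici_div_id ht hf).const_mul _) hf]
  congr with s
  ring

-- The factor `2 * t / s - 1` lies in `[-1, 1]` on the wedge, so `f s / s` itself need not be
-- integrable near `0`.
lemma integrableOn_two_mul_div_sub_one_mul {f : ℝ → ℝ} (hf : Integrable f) (r : ℝ) :
    IntegrableOn (fun p : ℝ × ℝ => (2 * p.1 / p.2 - 1) * f p.2) {p | p.1 ≤ p.2}
      ((volume.restrict (Ioc 0 r)).prod volume) := by
  refine (hf.comp_snd _).integrableOn.bdd_mul (c := 1)
    (by fun_prop : Measurable _).aestronglyMeasurable ?_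
  filter_upwards [ae_restrict_mem (measurableSet_le measurable_fst measurable_snd),
    ae_restrict_of_ae (Measure.quasiMeasurePreserving_fst.ae (ae_restrict_mem measurableSet_Ioc))]
    with p (hle : p.1 ≤ p.2) hp
  have hpos : 0 < p.2 := hp.1.trans_le hle
  have hdiv : p.1 / p.2 ≤ 1 := (div_le_one hpos).2 hle
  have hdiv_pos : 0 < p.1 / p.2 := div_pos hp.1 hpos
  rw [Real.norm_eq_abs, abs_le, mul_div_assoc]
  constructor <;> linarith

lemma setIntegral_Ioc_two_mul_div_sub_one {m : ℝ} (hm : 0 ≤ m) (s : ℝ) :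
    ∫ t in Ioc 0 m, (2 * t / s - 1) = m ^ 2 / s - m := by
  rw [← intervalIntegral.integral_of_le hm, intervalIntegral.integral_sub
    (Continuous.intervalIntegrable (by fun_prop) _ _) (by simp),
    intervalIntegral.integral_div, intervalIntegral.integral_const_mul, integral_id,
    intervalIntegral.integral_const]
  simp only [smul_eq_mul]
  ring

lemma setIntegral_Iic_two_mul_div_sub_one {r : ℝ} (hr : 0 ≤ r) (s : ℝ) :
    ∫ t in Iic s, (2 * t / s - 1) ∂volume.restrict (Ioc 0 r) =
      (Ioi r).indicator (fun s => r ^ 2 / s - r) s := by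
  rw [Measure.restrict_restrict measurableSet_Iic, inter_comm, Ioc_inter_Iic]
  rcases le_or_gt s r with hsr | hsr
  · rw [min_eq_right hsr, indicator_of_notMem (notMem_Ioi.2 hsr)]
    rcases le_or_gt s 0 with hs | hs
    · rw [Ioc_eq_empty hs.not_gt, setIntegral_empty]
    · rw [setIntegral_Ioc_two_mul_div_sub_one hs.le, sq, mul_self_div_self, sub_self]
  · rw [min_eq_left hsr.le, indicator_of_mem (mem_Ioi.2 hsr),
      setIntegral_Ioc_two_mul_div_sub_one hr]

lemma setIntegral_Ioc_two_mul_tail_div_sub_tail {f : ℝ → ℝ} {r : ℝ} (hr : 0 < r)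
    (hf : Integrable f) :
    ∫ t in Ioc 0 r, (2 * t * (∫ s in Ici t, f s / s) - ∫ s in Ici t, f s) =
      r ^ 2 * (∫ s in Ioi r, f s / s) - r * ∫ s in Ioi r, f s := by
  have hdiv : IntegrableOn (fun s => f s / s) (Ioi r) :=
    (integrableOn_Ici_div_id hr hf.integrableOn).mono_set Ioi_subset_Ici_self
  calc ∫ t in Ioc 0 r, (2 * t * (∫ s in Ici t, f s / s) - ∫ s in Ici t, f s)
      = ∫ t in Ioc 0 r, ∫ s in Ici t, (2 * t / s - 1) * f s :=
        setIntegral_congr_fun measurableSet_Ioc fun t ht =>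
          (setIntegral_Ici_two_mul_div_sub_one_mul ht.1 hf.integrableOn).symm
    _ = ∫ s, ∫ t in Iic s, (2 * t / s - 1) * f s ∂volume.restrict (Ioc 0 r) :=
        integral_setIntegral_Ici_swap (integrableOn_two_mul_div_sub_one_mul hf r)
    _ = ∫ s in Ioi r, (r ^ 2 / s - r) * f s := by
        simp only [integral_mul_const, setIntegral_Iic_two_mul_div_sub_one hr.le,
          ← integral_indicator measurableSet_Ioi, indicator_mul_left]
    _ = ∫ s in Ioi r, (r ^ 2 * (f s / s) - r * f s) := by
        congr with s
        ring
    _ = r ^ 2 * (∫ s in Ioi r, f s / s) - r * ∫ s in Ioi r, f s := by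
        rw [integral_sub (hdiv.const_mul _) (hf.integrableOn.const_mul _), integral_const_mul,
          integral_const_mul]

lemma one_sub_setIntegral_Iic {f : ℝ → ℝ} (hf : Integrable f) (hf_prob : ∫ t, f t = 1) (r : ℝ) :
    1 - ∫ t in Iic r, f t = ∫ t in Ioi r, f t := by
  rw [← compl_Iic, setIntegral_compl measurableSet_Iic hf, hf_prob]

lemma mul_setIntegral_Ioi_le {f : ℝ → ℝ} {r : ℝ} (hr : 0 ≤ r) (hf_nonneg : ∀ t, 0 ≤ f t)
    (hf_mean : IntegrableOn (fun t => t * f t) (Ioi 0)) :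
    r * ∫ t in Ioi r, f t ≤ ∫ t in Ioi 0, t * f t := by
  have hsub : Ioi r ⊆ Ioi 0 := Ioi_subset_Ioi hr
  calc r * ∫ t in Ioi r, f t
      = ∫ t in Ioi r, r * f t := (integral_const_mul r f).symm
    _ ≤ ∫ t in Ioi r, t * f t := by
        refine integral_mono_of_nonneg (ae_of_all _ fun t => mul_nonneg hr (hf_nonneg t))
          (hf_mean.mono_set hsub) ?_
        filter_upwards [ae_restrict_mem measurableSet_Ioi] with t ht
        exact mul_le_mul_of_nonneg_right ht.le (hf_nonneg t)
    _ ≤ ∫ t in Ioi 0, t * f t := by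
        refine setIntegral_mono_set hf_mean ?_ hsub.eventuallyLE
        filter_upwards [ae_restrict_mem measurableSet_Ioi] with t ht
        exact mul_nonneg ht.le (hf_nonneg t)

lemma bddAbove_mul_one_sub_setIntegral_Iic {f : ℝ → ℝ} (hf_nonneg : ∀ t, 0 ≤ f t)
    (hf : Integrable f) (hf_prob : ∫ t, f t = 1)
    (hf_mean : IntegrableOn (fun t => t * f t) (Ioi 0)) :
    BddAbove {y : ℝ | ∃ r : ℝ, 0 ≤ r ∧ y = r * (1 - ∫ t in Iic r, f t)} := by
  refine ⟨∫ t in Ioi 0, t * f t, ?_⟩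
  rintro _ ⟨r, hr, rfl⟩
  rw [one_sub_setIntegral_Iic hf hf_prob]
  exact mul_setIntegral_Ioi_le hr hf_nonneg hf_mean

lemma integrable_id_mul_of_support_subset {f : ℝ → ℝ} {K : Set ℝ} (hK : IsCompact K)
    (hf : IntegrableOn f K) (hf_supp : Function.support f ⊆ K) :
    Integrable fun t => t * f t :=
  (integrableOn_iff_integrable_of_support_subset
    ((Function.support_mul_subset_right _ f).trans hf_supp)).1
    (hf.continuousOn_mul continuousOn_id hK)

theorem neg_integral_t_psi_le_monopoly_rev_general
    (f : ℝ → ℝ)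
    (hf_nonneg : ∀ t, 0 ≤ f t)
    (hf_int : Integrable f)
    (hf_prob : ∫ t, f t = 1)
    (hf_bdd : BddAbove {y : ℝ | ∃ r' : ℝ, 0 ≤ r' ∧ y = r' * (1 - ∫ t' in Iic r', f t')})
    (ψ : ℝ → ℝ)
    (hψ : ∀ t : ℝ, 0 < t →
      ψ t = 2 * (∫ t' in Ici t, f t' / t') - (1 / t) * ∫ t' in Ici t, f t') :
    ∀ r : ℝ, 0 < r →
      -(∫ t in Ioc (0:ℝ) r, t * ψ t) ≤ r * (1 - ∫ t' in Iic r, f t') ∧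
      r * (1 - ∫ t' in Iic r, f t') ≤
        sSup {y : ℝ | ∃ r' : ℝ, 0 ≤ r' ∧ y = r' * (1 - ∫ t' in Iic r', f t')} := by
  refine fun r hr => ⟨?_, le_csSup hf_bdd ⟨r, hr.le, rfl⟩⟩
  have hψ_mul : EqOn (fun t => t * ψ t)
      (fun t => 2 * t * (∫ s in Ici t, f s / s) - ∫ s in Ici t, f s) (Ioc 0 r) := fun t ht => by
    have ht0 : t ≠ 0 := ht.1.ne'
    simp only [hψ t ht.1]
    field_simp
  have htail_div : 0 ≤ r ^ 2 * ∫ s in Ioi r, f s / s :=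
    mul_nonneg (sq_nonneg r) <| setIntegral_nonneg measurableSet_Ioi fun s hs =>
      div_nonneg (hf_nonneg s) (hr.trans hs).le
  rw [setIntegral_congr_fun measurableSet_Ioc hψ_mul,
    setIntegral_Ioc_two_mul_tail_div_sub_tail hr hf_int, one_sub_setIntegral_Iic hf_int hf_prob]
  linarith

/-- For a probability density `f` supported on `[l,h]` with `0 < l ≤ h < ∞`, with CDF `F`,
and `ψ t = 2∫_{t'≥t} f t'/t' dt' − (1/t)·∫_{t'≥t} f t' dt'`, for every `r > 0` one has
`−∫_{0<t≤r} t·ψ t dt ≤ r·(1 − F r) ≤ sup_{r'≥0} r'·(1 − F r')`. -/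
theorem neg_integral_t_psi_le_monopoly_rev
    (f : ℝ → ℝ) (l h : ℝ) (hl : 0 < l) (hlh : l ≤ h)
    (hf_nonneg : ∀ t, 0 ≤ f t)
    (hf_supp : Function.support f = Icc l h)
    (hf_int : Integrable f)
    (hf_prob : ∫ t, f t = 1)
    (ψ : ℝ → ℝ)
    (hψ : ∀ t : ℝ, 0 < t →
      ψ t = 2 * (∫ t' in Ici t, f t' / t') - (1 / t) * ∫ t' in Ici t, f t') :
    ∀ r : ℝ, 0 < r →
      -(∫ t in Ioc (0:ℝ) r, t * ψ t) ≤ r * (1 - ∫ t' in Iic r, f t') ∧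
      r * (1 - ∫ t' in Iic r, f t') ≤
        sSup {y : ℝ | ∃ r' : ℝ, 0 ≤ r' ∧ y = r' * (1 - ∫ t' in Iic r', f t')} := by
  have hf_mean : Integrable fun t => t * f t :=
    integrable_id_mul_of_support_subset isCompact_Icc hf_int.integrableOn hf_supp.subset
  exact neg_integral_t_psi_le_monopoly_rev_general f hf_nonneg hf_int hf_prob
    (bddAbove_mul_one_sub_setIntegral_Iic hf_nonneg hf_int hf_prob hf_mean.integrableOn) ψ hψ
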